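/- If n > 10080 is an extremely abundant number, then its largest prime factor p satisfies p < log n. -/

import Mathlib

open Real Finset

noncomputable section

/-- Sum of divisors of `n`. -/
def sigma1 (n : ℕ) : ℕ := n.divisors.sum id

/-- `n` is superabundant if `σ(n)/n > σ(m)/m` for all positive `m < n`. -/
def Superabundant (n : ℕ) : Prop :=
  0 < n ∧ ∀ m : ℕ, 0 < m → m < n → (sigma1 m : ℝ) / m < (sigma1 n : ℝ) / n

/-- Robin's quotient `f(n) = σ(n)/(n log log n)`. -/
def robinF (n : ℕ) : ℝ := (sigma1 n : ℝ) / (n * Real.log (Real.log n))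

/-- `n` is extremely abundant. -/
def ExtremelyAbundant (n : ℕ) : Prop :=
  n = 10080 ∨ (10080 < n ∧ ∀ m : ℕ, 10080 ≤ m → m < n → robinF m < robinF n)

/-!
Write `h n = σ(n) / n`, so that `f n = h n / log log n`, and let `n = p * m` be extremely abundant
with `p` prime and `log n ≤ p`. Since `h (p * m) ≤ (1 + 1 / p) * h m`, appending the factor `p`
raises `h` by a factor of at most `1 + 1 / p`, and `log n ≤ p` makes `log log` grow by at least
that much. Hence `f n ≤ f m`, which is absurd if `10080 ≤ m`.

If `m < 10080`, then `n` is compared with `10080` instead: `p ≥ 11`, so `h n ≤ (12 / 11) * h m`, and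
upper bounds for `h` on `m < 2520`, `m < 5040` and `m < 10080` give `f n ≤ f 10080`.
-/

section AbundancyIndex

lemma sum_divisors_mul_le (m n : ℕ) :
    ∑ d ∈ (m * n).divisors, d ≤ (∑ d ∈ m.divisors, d) * ∑ d ∈ n.divisors, d := by
  rw [Nat.divisors_mul, Finset.mul_def, Finset.sum_mul_sum, ← Finset.sum_product']
  exact Finset.sum_image_le_of_nonneg (f := id) fun _ _ => Nat.zero_le _

lemma abundancyIndex_nonneg (n : ℕ) : 0 ≤ n.abundancyIndex := by
  unfold Nat.abundancyIndex
  positivity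

lemma abundancyIndex_mul_le (m n : ℕ) :
    (m * n).abundancyIndex ≤ m.abundancyIndex * n.abundancyIndex := by
  unfold Nat.abundancyIndex
  rw [div_mul_div_comm, Nat.cast_mul]
  gcongr
  exact_mod_cast sum_divisors_mul_le m n

lemma abundancyIndex_mul_of_coprime {m n : ℕ} (h : m.Coprime n) :
    (m * n).abundancyIndex = m.abundancyIndex * n.abundancyIndex := by
  unfold Nat.abundancyIndex
  rw [div_mul_div_comm]
  exact_mod_cast congrArg (fun s : ℕ => (s : ℚ) / (m * n : ℕ)) h.sum_divisors_mul

lemma abundancyIndex_prime_pow {p : ℕ} (hp : p.Prime) (e : ℕ) :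
    (p ^ e).abundancyIndex = (∑ i ∈ range (e + 1), (p : ℚ) ^ i) / p ^ e := by
  simp [Nat.abundancyIndex, Nat.sum_divisors_prime_pow hp]

lemma abundancyIndex_prime_mul_le {p : ℕ} (hp : p.Prime) (m : ℕ) :
    (p * m).abundancyIndex ≤ (1 + 1 / p) * m.abundancyIndex := by
  have hp0 : (p : ℚ) ≠ 0 := mod_cast hp.ne_zero
  have h : p.abundancyIndex = 1 + 1 / p := by
    simpa [sum_range_succ, add_div, hp0, add_comm] using abundancyIndex_prime_pow hp 1
  exact h ▸ abundancyIndex_mul_le p m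

lemma abundancyIndex_le_pow_log {B : ℕ} (hB : 1 < B) {n : ℕ} (hn : n ≠ 0)
    (h : ∀ q : ℕ, q.Prime → q ∣ n → B ≤ q) :
    n.abundancyIndex ≤ (1 + 1 / B) ^ Nat.log B n := by
  induction n using induction_on_primes with
  | zero => exact absurd rfl hn
  | one => simp [Nat.abundancyIndex]
  | prime_mul q k hq ih =>
    have hk : k ≠ 0 := right_ne_zero_of_mul hn
    have hBq : B ≤ q := h q hq (dvd_mul_right q k)
    have hlog : Nat.log B k + 1 ≤ Nat.log B (q * k) := by
      rw [← Nat.log_mul_base hB hk, mul_comm k]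
      exact Nat.log_mono_right (Nat.mul_le_mul_right k hBq)
    calc (q * k).abundancyIndex ≤ (1 + 1 / q) * k.abundancyIndex :=
          abundancyIndex_prime_mul_le hq k
      _ ≤ (1 + 1 / B) * (1 + 1 / B) ^ Nat.log B k := by
          gcongr
          · exact abundancyIndex_nonneg k
          · exact ih hk fun r hr hrk => h r hr (hrk.mul_left q)
      _ = (1 + 1 / B) ^ (Nat.log B k + 1) := (pow_succ' _ _).symm
      _ ≤ (1 + 1 / B) ^ Nat.log B (q * k) := by
          gcongr
          exact le_add_of_nonneg_right (by positivity)

/-- A decidable certificate for `σ(m) / m ≤ c` for all positive `m ≤ x` whose prime factors lie in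
the list or are at least `B`. The exponents of the listed primes are enumerated, and each of the at
most `Nat.log B x` remaining prime factors is charged `1 + 1 / B`. -/
def AbundancyCertificate (B : ℕ) : List ℕ → ℕ → ℚ → Prop
  | [], x, c => (1 + 1 / B : ℚ) ^ Nat.log B x ≤ c
  | p :: ps, x, c => ∀ e ≤ Nat.log p x,
      AbundancyCertificate B ps (x / p ^ e) (c / ((∑ i ∈ range (e + 1), (p : ℚ) ^ i) / p ^ e))

instance AbundancyCertificate.decidable (B : ℕ) :
    ∀ (ps : List ℕ) (x : ℕ) (c : ℚ), Decidable (AbundancyCertificate B ps x c)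
  | [], x, c => inferInstanceAs (Decidable ((1 + 1 / B : ℚ) ^ Nat.log B x ≤ c))
  | p :: ps, x, c =>
    have := AbundancyCertificate.decidable B ps
    inferInstanceAs (Decidable (∀ e ≤ Nat.log p x,
      AbundancyCertificate B ps (x / p ^ e) (c / ((∑ i ∈ range (e + 1), (p : ℚ) ^ i) / p ^ e))))

theorem AbundancyCertificate.abundancyIndex_le {B : ℕ} (hB : 1 < B) {ps : List ℕ}
    (hps : ∀ p ∈ ps, p.Prime) {x m : ℕ} {c : ℚ} (hc : AbundancyCertificate B ps x c)
    (hm : m ≠ 0) (hmx : m ≤ x) (hmB : ∀ q : ℕ, q.Prime → q ∣ m → q ∈ ps ∨ B ≤ q) :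
    m.abundancyIndex ≤ c := by
  induction ps generalizing x m c with
  | nil =>
    calc m.abundancyIndex ≤ (1 + 1 / B) ^ Nat.log B m :=
          abundancyIndex_le_pow_log hB hm fun q hq hqm => by simpa using hmB q hq hqm
      _ ≤ (1 + 1 / B) ^ Nat.log B x := by
          gcongr
          exact le_add_of_nonneg_right (by positivity)
      _ ≤ c := hc
  | cons p ps ih =>
    have hp : p.Prime := hps p List.mem_cons_self
    obtain ⟨e, k, hpk, rfl⟩ := Nat.exists_eq_pow_mul_and_not_dvd hm p hp.ne_one
    have hk : k ≠ 0 := right_ne_zero_of_mul hm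
    have hex : e ≤ Nat.log p x :=
      Nat.le_log_of_pow_le hp.one_lt ((Nat.le_mul_of_pos_right _ hk.pos).trans hmx)
    have hkx : k ≤ x / p ^ e := (Nat.le_div_iff_mul_le (pow_pos hp.pos e)).2 (by rwa [mul_comm])
    have hkB (q : ℕ) (hq : q.Prime) (hqk : q ∣ k) : q ∈ ps ∨ B ≤ q := by
      have hqp : q ≠ p := by rintro rfl; exact hpk hqk
      simpa [hqp] using hmB q hq (hqk.mul_left _)
    have hpe : 0 < (p ^ e).abundancyIndex := by
      have := hp.pos
      rw [abundancyIndex_prime_pow hp]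
      positivity
    have hind : k.abundancyIndex ≤ c / (p ^ e).abundancyIndex := by
      rw [abundancyIndex_prime_pow hp]
      exact ih (fun q hq => hps q (List.mem_cons_of_mem p hq)) (hc e hex) hk hkx hkB
    calc (p ^ e * k).abundancyIndex ≤ (p ^ e).abundancyIndex * k.abundancyIndex :=
          abundancyIndex_mul_le _ _
      _ ≤ c := (le_div_iff₀' hpe).1 hind

lemma mem_or_eleven_le_of_prime {q : ℕ} (hq : q.Prime) : q ∈ [2, 3, 5, 7] ∨ 11 ≤ q := by
  by_contra! ⟨hmem, hlt⟩
  exact hmem ((by decide : ∀ r < 11, r.Prime → r ∈ [2, 3, 5, 7]) q hlt hq)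

lemma abundancyIndex_le_of_certificate {x m : ℕ} {c : ℚ}
    (hc : AbundancyCertificate 11 [2, 3, 5, 7] x c) (hm : m ≠ 0) (hmx : m ≤ x) :
    m.abundancyIndex ≤ c :=
  hc.abundancyIndex_le (by norm_num) (by decide) hm hmx fun _ hq _ => mem_or_eleven_le_of_prime hq

/- Here `26 / 7` and `403 / 105` are the abundancy indices of `2520` and `5040`, whereas `143 / 40`
is `11 / 12` times that of `10080`. -/
lemma abundancyIndex_le_of_lt_2520 {m : ℕ} (hm : m ≠ 0) (h : m < 2520) :
    m.abundancyIndex ≤ 143 / 40 :=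
  abundancyIndex_le_of_certificate (x := 2519) (by decide +kernel) hm (Nat.le_of_lt_succ h)

lemma abundancyIndex_le_of_lt_5040 {m : ℕ} (hm : m ≠ 0) (h : m < 5040) :
    m.abundancyIndex ≤ 26 / 7 :=
  abundancyIndex_le_of_certificate (x := 5039) (by decide +kernel) hm (Nat.le_of_lt_succ h)

lemma abundancyIndex_le_of_lt_10080 {m : ℕ} (hm : m ≠ 0) (h : m < 10080) :
    m.abundancyIndex ≤ 403 / 105 :=
  abundancyIndex_le_of_certificate (x := 10079) (by decide +kernel) hm (Nat.le_of_lt_succ h)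

lemma abundancyIndex_10080 : Nat.abundancyIndex 10080 = 39 / 10 := by
  rw [show 10080 = 2 ^ 5 * (3 ^ 2 * (5 ^ 1 * 7 ^ 1)) by norm_num,
    abundancyIndex_mul_of_coprime (by norm_num), abundancyIndex_mul_of_coprime (by norm_num),
    abundancyIndex_mul_of_coprime (by norm_num), abundancyIndex_prime_pow Nat.prime_two,
    abundancyIndex_prime_pow Nat.prime_three, abundancyIndex_prime_pow Nat.prime_five,
    abundancyIndex_prime_pow Nat.prime_seven]
  norm_num [sum_range_succ]

end AbundancyIndex

section LogLog

lemma log_log_le_log_log {x y : ℝ} (hx : 1 < x) (hxy : x ≤ y) : log (log x) ≤ log (log y) :=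
  log_le_log (log_pos hx) (log_le_log (by linarith) hxy)

lemma log_log_pos {x : ℝ} (hx : 3 ≤ x) : 0 < log (log x) :=
  log_pos ((lt_log_iff_exp_lt (by linarith)).2 (exp_one_lt_three.trans_le hx))

/- With `u = log x` and `y = log (p * x) = log p + u ≤ p`, this is
`log u / p ≤ log p / y = 1 - u / y ≤ log (y / u)`. -/
lemma one_add_one_div_mul_log_log_le {p x : ℝ} (hp : 1 ≤ p) (hx : 1 < x)
    (h : log (p * x) ≤ p) : (1 + 1 / p) * log (log x) ≤ log (log (p * x)) := by
  have hu : 0 < log x := log_pos hx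
  have hp0 : 0 ≤ log p := log_nonneg hp
  have hy : log (p * x) = log p + log x := log_mul (by linarith) (by linarith)
  have hy0 : 0 < log (p * x) := by linarith
  have hup : log (log x) ≤ log p := log_le_log hu (by linarith)
  calc (1 + 1 / p) * log (log x) = log (log x) + log (log x) / p := by ring
    _ ≤ log (log x) + log p / log (p * x) := by gcongr
    _ = log (log x) + (1 - (log (p * x) / log x)⁻¹) := by
        rw [inv_div, one_sub_div hy0.ne', hy, add_sub_cancel_right]
    _ ≤ log (log x) + log (log (p * x) / log x) := by
        gcongr
        exact one_sub_inv_le_log_of_pos (by positivity)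
    _ = log (log (p * x)) := by rw [log_div hy0.ne' hu.ne', add_sub_cancel]

lemma log_le_div_of_pow_le {x : ℝ} (hx : 0 < x) {a b : ℕ} (hb : 0 < b)
    (h : x ^ b ≤ 2.7182818283 ^ a) : log x ≤ a / b := by
  rw [le_div_iff₀ (by positivity), mul_comm, ← log_pow, log_le_iff_le_exp (by positivity),
    ← exp_one_pow]
  exact h.trans (pow_le_pow_left₀ (by norm_num) exp_one_gt_d9.le a)

lemma div_le_log_of_pow_le {x : ℝ} (hx : 0 < x) {a b : ℕ} (hb : 0 < b)
    (h : 2.7182818286 ^ a ≤ x ^ b) : a / b ≤ log x := by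
  rw [div_le_iff₀ (by positivity), mul_comm, ← log_pow, le_log_iff_exp_le (by positivity),
    ← exp_one_pow]
  exact (pow_le_pow_left₀ (exp_pos 1).le exp_one_lt_d9.le a).trans h

lemma nine_lt_log_10080 : 9 < log 10080 := by
  have h : (46 : ℕ) / (5 : ℕ) ≤ log 10080 :=
    div_le_log_of_pow_le (by norm_num) (by norm_num) (by norm_num)
  exact lt_of_lt_of_le (by norm_num) h

lemma log_log_10080_le : log (log 10080) ≤ 20 / 9 := by
  have hlog : log 10080 ≤ (83 : ℕ) / (9 : ℕ) :=
    log_le_div_of_pow_le (by norm_num) (by norm_num) (by norm_num)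
  have hloglog : log ((83 : ℕ) / (9 : ℕ)) ≤ (20 : ℕ) / (9 : ℕ) :=
    log_le_div_of_pow_le (by norm_num) (by norm_num) (by norm_num)
  exact_mod_cast (log_le_log (log_pos (by norm_num)) hlog).trans hloglog

lemma le_log_log_27720 : 37 / 16 ≤ log (log 27720) := by
  have hlog : (51 : ℕ) / (5 : ℕ) ≤ log 27720 :=
    div_le_log_of_pow_le (by norm_num) (by norm_num) (by norm_num)
  have hloglog : (37 : ℕ) / (16 : ℕ) ≤ log ((51 : ℕ) / (5 : ℕ)) :=
    div_le_log_of_pow_le (by norm_num) (by norm_num) (by norm_num)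
  exact_mod_cast hloglog.trans (log_le_log (by norm_num) hlog)

lemma le_log_log_55440 : 43 / 18 ≤ log (log 55440) := by
  have hlog : (120 : ℕ) / (11 : ℕ) ≤ log 55440 :=
    div_le_log_of_pow_le (by norm_num) (by norm_num) (by norm_num)
  have hloglog : (43 : ℕ) / (18 : ℕ) ≤ log ((120 : ℕ) / (11 : ℕ)) :=
    div_le_log_of_pow_le (by norm_num) (by norm_num) (by norm_num)
  exact_mod_cast hloglog.trans (log_le_log (by norm_num) hlog)

end LogLog

section RobinQuotient

lemma robinF_eq_abundancyIndex_div (n : ℕ) :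
    robinF n = (n.abundancyIndex : ℝ) / log (log n) := by
  simp [robinF, sigma1, Nat.abundancyIndex, div_div]

lemma le_robinF_10080 : 351 / 200 ≤ robinF 10080 := by
  have h : 0 < log (log 10080) := log_log_pos (by norm_num)
  rw [robinF_eq_abundancyIndex_div, abundancyIndex_10080]
  push_cast
  rw [le_div_iff₀ h]
  linarith [log_log_10080_le]

lemma robinF_prime_mul_le_div {p m : ℕ} (hp : p.Prime) {q : ℝ} (hq : 0 < q) (hqp : q ≤ p)
    {c : ℚ} (hc : m.abundancyIndex ≤ c) {l : ℝ} (hl : 0 < l)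
    (hlm : l ≤ log (log (p * m : ℕ))) : robinF (p * m) ≤ (1 + 1 / q) * c / l := by
  have hh : ((p * m).abundancyIndex : ℝ) ≤ (1 + 1 / p) * m.abundancyIndex := by
    simpa using (Rat.cast_le (K := ℝ)).2 (abundancyIndex_prime_mul_le hp m)
  have hm : (0 : ℝ) ≤ m.abundancyIndex := mod_cast abundancyIndex_nonneg m
  have hc' : (m.abundancyIndex : ℝ) ≤ c := mod_cast hc
  rw [robinF_eq_abundancyIndex_div]
  calc ((p * m).abundancyIndex : ℝ) / log (log (p * m : ℕ))
      ≤ (1 + 1 / p) * m.abundancyIndex / l := by gcongr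
    _ ≤ (1 + 1 / q) * c / l := by gcongr

theorem robinF_prime_mul_le {p m : ℕ} (hp : p.Prime) (hm : 3 ≤ m)
    (h : log (p * m : ℕ) ≤ p) : robinF (p * m) ≤ robinF m := by
  have hp1 : (1 : ℝ) ≤ p := mod_cast hp.one_le
  have hm3 : (3 : ℝ) ≤ m := mod_cast hm
  have hlm : 0 < log (log m) := log_log_pos hm3
  have hgrowth : (1 + 1 / p) * log (log m) ≤ log (log (p * m : ℕ)) := by
    rw [Nat.cast_mul] at h ⊢
    exact one_add_one_div_mul_log_log_le hp1 (by linarith) h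
  calc robinF (p * m) ≤ (1 + 1 / p) * m.abundancyIndex / ((1 + 1 / p) * log (log m)) :=
        robinF_prime_mul_le_div hp (by positivity) le_rfl le_rfl (by positivity) hgrowth
    _ = robinF m := by
        rw [mul_div_mul_left _ _ (by positivity), robinF_eq_abundancyIndex_div]

theorem robinF_prime_mul_le_robinF_10080 {p m : ℕ} (hp : p.Prime) (hp11 : 11 ≤ p)
    (hn : 10080 < p * m) (hm : m < 10080) : robinF (p * m) ≤ robinF 10080 := by
  have hm0 : m ≠ 0 := by rintro rfl; simp at hn
  have hp11' : (11 : ℝ) ≤ p := mod_cast hp11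
  have le_log_log {N : ℕ} (hN : 1 < N) (hNn : N ≤ p * m) :
      log (log N) ≤ log (log (p * m : ℕ)) :=
    log_log_le_log_log (mod_cast hN) (mod_cast hNn)
  rcases lt_or_ge m 2520 with h2520 | h2520
  · calc robinF (p * m) ≤ (1 + 1 / 11) * (143 / 40 : ℚ) / log (log (10080 : ℕ)) :=
          robinF_prime_mul_le_div hp (by norm_num) hp11' (abundancyIndex_le_of_lt_2520 hm0 h2520)
            (log_log_pos (by norm_num)) (le_log_log (by norm_num) hn.le)
      _ = robinF 10080 := by
          rw [robinF_eq_abundancyIndex_div, abundancyIndex_10080]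
          norm_num
  refine le_trans ?_ le_robinF_10080
  rcases lt_or_ge m 5040 with h5040 | h5040
  · calc robinF (p * m) ≤ (1 + 1 / 11) * (26 / 7 : ℚ) / (37 / 16) :=
          robinF_prime_mul_le_div hp (by norm_num) hp11' (abundancyIndex_le_of_lt_5040 hm0 h5040)
            (by norm_num) (le_log_log_27720.trans
              (mod_cast le_log_log (N := 27720) (by norm_num) (Nat.mul_le_mul hp11 h2520)))
      _ ≤ 351 / 200 := by norm_num
  · calc robinF (p * m) ≤ (1 + 1 / 11) * (403 / 105 : ℚ) / (43 / 18) :=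
          robinF_prime_mul_le_div hp (by norm_num) hp11' (abundancyIndex_le_of_lt_10080 hm0 hm)
            (by norm_num) (le_log_log_55440.trans
              (mod_cast le_log_log (N := 55440) (by norm_num) (Nat.mul_le_mul hp11 h5040)))
      _ ≤ 351 / 200 := by norm_num

end RobinQuotient

theorem extremely_abundant_largest_prime_lt_log_general {n : ℕ} (hn : ExtremelyAbundant n)
    {p : ℕ} (hp : p.Prime) (hpn : p ∣ n) : (p : ℝ) < log n := by
  obtain rfl | ⟨hbig, hrec⟩ := hn
  · have hp7 : p ≤ 7 := by
      rw [show 10080 = 2 * Nat.factorial 7 by decide, hp.dvd_mul, hp.dvd_factorial] at hpn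
      exact hpn.elim (fun h => (Nat.le_of_dvd two_pos h).trans (by norm_num)) id
    calc (p : ℝ) ≤ 7 := mod_cast hp7
      _ < log (10080 : ℕ) := by exact_mod_cast (by norm_num : (7 : ℝ) < 9).trans nine_lt_log_10080
  obtain ⟨m, rfl⟩ := hpn
  by_contra! hle
  rcases le_or_gt 10080 m with hm | hm
  · have hmn : m < p * m := lt_mul_of_one_lt_left (by omega) hp.one_lt
    exact (robinF_prime_mul_le hp (by omega) hle).not_gt (hrec m hm hmn)
  · have hp9 : 9 < p := by
      have hlog : log 10080 ≤ log (p * m : ℕ) := log_le_log (by norm_num) (mod_cast hbig.le)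
      exact_mod_cast nine_lt_log_10080.trans_le (hlog.trans hle)
    have hp11 : 11 ≤ p := (mem_or_eleven_le_of_prime hp).resolve_left fun hmem =>
      hp9.not_ge ((by decide : ∀ q ∈ [2, 3, 5, 7], q ≤ 9) p hmem)
    exact (robinF_prime_mul_le_robinF_10080 hp hp11 hbig hm).not_gt (hrec 10080 le_rfl hbig)

theorem extremely_abundant_largest_prime_lt_log
    (n : ℕ) (hn : ExtremelyAbundant n) (hbig : 10080 < n)
    (p : ℕ) (hp : p.Prime) (hpn : p ∣ n)
    (hmax : ∀ q : ℕ, q.Prime → q ∣ n → q ≤ p) :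
    (p : ℝ) < Real.log n :=
  extremely_abundant_largest_prime_lt_log_general hn hp hpn
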